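/- Let 𝓗 = (V,E) be a connected hypergraph with associated bipartite graph Bip 𝓗. Set g = Σ_{e∈E} deg_{Bip 𝓗}(e) − |E| − |V| + 1, r'_2(𝓗) = min{|H'| : H' ⊆ E such that Bip 𝓗|_{H'} contains at least 2 cycles}, and, for j ≥ 1, C_j(𝓗) = {H' ⊆ E : Bip 𝓗|_{H'} has exactly one cycle, that cycle has length 2j, and |H'| = j}. Then for all i with 0 ≤ i < r'_2(𝓗), [x^i]I_𝓗(x) = C(g+i−1, i) − Σ_{j=0}^{i} C(g+i−1−j, i−j)·|C_j(𝓗)|, where C(·,·) denotes the binomial coefficient and C_0(𝓗) = ∅. -/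

import Mathlib

open Finset Polynomial

/-- `f` is the rank function of a polymatroid over the ground set `[n]` (encoded as `Fin n`):
normalization, monotonicity and submodularity. -/
def IsPolymatroidRank (n : ℕ) (f : Finset (Fin n) → ℕ) : Prop :=
  f ∅ = 0 ∧ (∀ I J : Finset (Fin n), I ⊆ J → f I ≤ f J) ∧
    ∀ I J : Finset (Fin n), f (I ∪ J) + f (I ∩ J) ≤ f I + f J

/-- The set of bases of the polymatroid `P ⊆ ℤ^n_{≥0}` with rank function `f`:
all nonnegative integer vectors `a` with `∑_{i ∈ I} a i ≤ f I` for every `I ⊆ [n]`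
and `∑_{i ∈ [n]} a i = f [n]`.  (Every such vector has entries `≤ f [n]`, whence the
bounding box used to produce a `Finset`.) -/
def polyBases (n : ℕ) (f : Finset (Fin n) → ℕ) : Finset (Fin n → ℤ) :=
  ((Finset.univ : Finset (Fin n → Fin (f Finset.univ + 1))).image
      (fun a i => ((a i : ℕ) : ℤ))).filter
    fun a => (∀ i, 0 ≤ a i) ∧ (∀ I : Finset (Fin n), ∑ i ∈ I, a i ≤ (f I : ℤ)) ∧
      ∑ i, a i = (f Finset.univ : ℤ)

/-- The externally active indices of a basis `a`: those `i` such that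
`a + e_i - e_j ∉ P` for every `j < i`. -/
def extAct (n : ℕ) (f : Finset (Fin n) → ℕ) (a : Fin n → ℤ) : Finset (Fin n) :=
  Finset.univ.filter fun i => ∀ j, j < i →
    (fun t => a t + (if t = i then 1 else 0) - (if t = j then 1 else 0)) ∉ polyBases n f

/-- The internally active indices of a basis `a`: those `i` such that
`a - e_i + e_j ∉ P` for every `j < i`. -/
def intAct (n : ℕ) (f : Finset (Fin n) → ℕ) (a : Fin n → ℤ) : Finset (Fin n) :=
  Finset.univ.filter fun i => ∀ j, j < i →
    (fun t => a t - (if t = i then 1 else 0) + (if t = j then 1 else 0)) ∉ polyBases n f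

/-- The exterior polynomial `X_P(y) = ∑_{a ∈ P} y^(n - |Ext(a)|)`. -/
noncomputable def exteriorPoly (n : ℕ) (f : Finset (Fin n) → ℕ) : Polynomial ℤ :=
  ∑ a ∈ polyBases n f, X ^ (n - (extAct n f a).card)

/-- The interior polynomial `I_P(x) = ∑_{a ∈ P} x^(n - |Int(a)|)`. -/
noncomputable def interiorPoly (n : ℕ) (f : Finset (Fin n) → ℕ) : Polynomial ℤ :=
  ∑ a ∈ polyBases n f, X ^ (n - (intAct n f a).card)

/-- `r_k(P) = min { n - |F| : F ⊆ [n], f F ≤ f [n] - k }` (junk value `0` if no such `F`). -/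
noncomputable def rk (n : ℕ) (f : Finset (Fin n) → ℕ) (k : ℕ) : ℕ :=
  sInf {m | ∃ F : Finset (Fin n), (f F : ℤ) ≤ (f Finset.univ : ℤ) - k ∧ m = n - F.card}

/-- `r'_k(P) = min { |F| : F ⊆ [n], ∑_{i ∈ F} f {i} - f F ≥ k }` (junk value `0` if no such `F`). -/
noncomputable def rk' (n : ℕ) (f : Finset (Fin n) → ℕ) (k : ℕ) : ℕ :=
  sInf {m | ∃ F : Finset (Fin n), (k : ℤ) ≤ (∑ i ∈ F, (f {i} : ℤ)) - (f F : ℤ) ∧ m = F.card}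

/-- `H_j(P)`: the flats `H` (i.e. `f (H ∪ {e}) > f H` for all `e ∉ H`) with
`f H = f [n] - 1` and `n - |H| = j`. -/
def Hset (n : ℕ) (f : Finset (Fin n) → ℕ) (j : ℕ) : Finset (Finset (Fin n)) :=
  Finset.univ.filter fun H =>
    (∀ e, e ∉ H → f H < f (insert e H)) ∧ (f H : ℤ) = (f Finset.univ : ℤ) - 1 ∧
      n - H.card = j

/-- `C_j(P)`: the sets `C` with `|C| = j`, `∑_{i ∈ C} f {i} - f C = 1` and
`∑_{i ∈ C \ {j'}} f {i} = f (C \ {j'})` for every `j' ∈ C`. -/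
def Cset (n : ℕ) (f : Finset (Fin n) → ℕ) (j : ℕ) : Finset (Finset (Fin n)) :=
  Finset.univ.filter fun C => C.card = j ∧
    (∑ i ∈ C, (f {i} : ℤ)) - (f C : ℤ) = 1 ∧
    ∀ j' ∈ C, (∑ i ∈ C.erase j', (f {i} : ℤ)) = (f (C.erase j') : ℤ)

/-- The dual rank function `f*(I) = f([n] \ I) - f([n]) + ∑_{i ∈ I} f {i}`
(the subtraction is exact for a polymatroid rank function). -/
def fdual (n : ℕ) (f : Finset (Fin n) → ℕ) : Finset (Fin n) → ℕ :=
  fun I => f (Finset.univ \ I) + (∑ i ∈ I, f {i}) - f Finset.univ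

/-- The bipartite graph `Bip 𝓗` associated with the hypergraph `𝓗 = (V, E)` (hyperedges are
given as a family `E : Fin m → Finset V`, so that repeated hyperedges are allowed):
`v ∈ V` is adjacent to `e ∈ E` iff `v ∈ e`. -/
def bipGraph {V : Type*} (m : ℕ) (E : Fin m → Finset V) : SimpleGraph (V ⊕ Fin m) :=
  SimpleGraph.fromRel fun x y =>
    ∃ (v : V) (e : Fin m), v ∈ E e ∧ x = Sum.inl v ∧ y = Sum.inr e

/-- The vertex set of `Bip 𝓗|_{E'}`: the hyperedges in `E'` together with all vertices of `V`
incident with an element of `E'`. -/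
def bipVerts {V : Type*} (m : ℕ) (E : Fin m → Finset V) (E' : Finset (Fin m)) :
    Set (V ⊕ Fin m) :=
  {x | ∃ e ∈ E', x = Sum.inr e ∨ ∃ v ∈ E e, x = Sum.inl v}

/-- The graph `Bip 𝓗|_{E'}`: the subgraph of `Bip 𝓗` induced by `bipVerts`. -/
def restGraph {V : Type*} (m : ℕ) (E : Fin m → Finset V) (E' : Finset (Fin m)) :
    SimpleGraph (bipVerts m E E') :=
  SimpleGraph.induce (bipVerts m E E') (bipGraph m E)

/-- `c(E')`: the number of connected components of `Bip 𝓗|_{E'}`. -/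
noncomputable def compCount {V : Type*} (m : ℕ) (E : Fin m → Finset V)
    (E' : Finset (Fin m)) : ℕ :=
  Nat.card (restGraph m E E').ConnectedComponent

/-- The rank function `μ` of the hypergraphical polymatroid:
`μ(∅) = 0` and `μ(E') = |⋃ E'| - c(E')`. -/
noncomputable def muRank {V : Type*} [DecidableEq V] (m : ℕ) (E : Fin m → Finset V) :
    Finset (Fin m) → ℕ :=
  fun E' => (E'.biUnion E).card - compCount m E E'

/-- `Bip 𝓗|_{H'}` contains at least two (distinct) cycles: there are two cycles whose
edge sets differ. -/
def hasTwoCycles {V : Type*} (m : ℕ) (E : Fin m → Finset V) (H' : Finset (Fin m)) : Prop :=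
  ∃ (u₁ : bipVerts m E H') (w₁ : (restGraph m E H').Walk u₁ u₁)
    (u₂ : bipVerts m E H') (w₂ : (restGraph m E H').Walk u₂ u₂),
      w₁.IsCycle ∧ w₂.IsCycle ∧ {x | x ∈ w₁.edges} ≠ {x | x ∈ w₂.edges}

open Classical in
/-- `C_j(𝓗)`: the sets `H' ⊆ E` with `|H'| = j` such that `Bip 𝓗|_{H'}` has exactly one
cycle (all cycles have the same edge set) and this cycle has length `2j`. -/
noncomputable def hypCj {V : Type*} (m : ℕ) (E : Fin m → Finset V) (j : ℕ) :
    Finset (Finset (Fin m)) :=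
  Finset.univ.filter fun H' =>
    H'.card = j ∧
    ∃ (u : bipVerts m E H') (w : (restGraph m E H').Walk u u), w.IsCycle ∧
      w.length = 2 * j ∧
      ∀ (u' : bipVerts m E H') (w' : (restGraph m E H').Walk u' u'), w'.IsCycle →
        {x | x ∈ w'.edges} = {x | x ∈ w.edges}

/-!
For a polymatroid with rank function `f`, the nullity `ν I = ∑ i ∈ I, f {i} - f I` is supermodular
and vanishes on singletons. The substitution `b i = f {i} - a i` turns the bases `a` of the
polymatroid into the minimal integer points `b` of the region
`{d | ∀ I, ν I ≤ ∑ i ∈ I, d i}`, and the cells obtained by increasing the active coordinates of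
each `b` tile that region. Give every coordinate a geometric weight with success probability `X`,
capped at some `M > ν univ`. A cell then has weight `(1 - X) ^ g * X ^ #(inactive coordinates)`,
with `g = ν univ`, so the region has weight `(1 - X) ^ g * I(X)`, where `I` is the interior
polynomial.

Points with more than `k` uncapped coordinates have weight divisible by `X ^ (k + 1)`. If sets of
size at most `k` have nullity at most one, any other point lies in the region unless it vanishes on
a circuit, which is then unique. As the points vanishing on `C` have weight `X ^ #C`, this gives
`(1 - X) ^ g * I(X) ≡ 1 - ∑ X ^ #C` modulo `X ^ (k + 1)`, the sum running over the circuits, and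
division by `(1 - X) ^ g` yields the coefficients of `I` up to degree `k`.

For the hypergraphical polymatroid, `ν H` is the cyclomatic number of `Bip 𝓗|_H`. Hence `ν H ≤ 1`
unless there are two cycles, and the circuits are the `H` whose only cycle passes through every
hyperedge of `H`.
-/

section Nullity

variable {ι : Type*} {ν : Finset ι → ℤ}

/-- `d` lies in the contrapolymatroid of `ν`, the dual counterpart of the region
`{a | ∀ I, ∑ i ∈ I, a i ≤ f I}` cut out by a rank function. -/
def LiesAbove (ν : Finset ι → ℤ) (d : ι → ℤ) : Prop :=
  ∀ I : Finset ι, ν I ≤ ∑ i ∈ I, d i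

lemma LiesAbove.mono {d d' : ι → ℤ} (hd : LiesAbove ν d) (hle : d ≤ d') : LiesAbove ν d' :=
  fun I => (hd I).trans (sum_le_sum fun i _ => hle i)

variable [DecidableEq ι]

/-- The abstract properties of the nullity `I ↦ ∑ i ∈ I, f {i} - f I` of a polymatroid rank
function `f`; they imply monotonicity (`IsNullity.mono`). -/
structure IsNullity (ν : Finset ι → ℤ) : Prop where
  empty : ν ∅ = 0
  singleton (i : ι) : ν {i} = 0
  supermodular (I J : Finset ι) : ν I + ν J ≤ ν (I ∪ J) + ν (I ∩ J)

/-- Circuits: the minimal sets of positive nullity, required to have nullity one as in the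
definition of `Cset`. -/
def IsCircuit (ν : Finset ι → ℤ) (C : Finset ι) : Prop :=
  ν C = 1 ∧ ∀ e ∈ C, ν (C.erase e) = 0

namespace IsNullity

lemma le_insert (h : IsNullity ν) (I : Finset ι) (e : ι) : ν I ≤ ν (insert e I) := by
  by_cases he : e ∈ I
  · rw [insert_eq_of_mem he]
  · have := h.supermodular {e} I
    rw [singleton_inter_of_notMem he, h.empty, h.singleton, ← insert_eq] at this
    linarith

lemma mono (h : IsNullity ν) : Monotone ν :=
  Finset.monotone_iff_forall_le_insert.mpr fun I e _ => h.le_insert I e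

lemma nonneg (h : IsNullity ν) (I : Finset ι) : 0 ≤ ν I :=
  h.empty ▸ h.mono (empty_subset I)

end IsNullity

lemma LiesAbove.nonneg (h : IsNullity ν) {d : ι → ℤ} (hd : LiesAbove ν d) : 0 ≤ d := fun i => by
  simpa [h.singleton] using hd {i}

lemma LiesAbove.sum_sup_eq (h : IsNullity ν) {d : ι → ℤ} (hd : LiesAbove ν d)
    {F : Finset (Finset ι)} (hF : ∀ T ∈ F, ∑ i ∈ T, d i = ν T) :
    ∑ i ∈ F.sup id, d i = ν (F.sup id) := by
  refine sup_induction (p := fun T => ∑ i ∈ T, d i = ν T) (by simp [h.empty]) ?_ hF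
  intro S hS T hT
  have hunion := hd (S ∪ T)
  have hinter := hd (S ∩ T)
  have := h.supermodular S T
  have := sum_union_inter (s₁ := S) (s₂ := T) (f := d)
  simp only [sup_eq_union]
  linarith

lemma sum_add_single_sub_single (d : ι → ℤ) (i j : ι) (I : Finset ι) :
    ∑ t ∈ I, (d + Pi.single i 1 - Pi.single j 1 : ι → ℤ) t =
      ∑ t ∈ I, d t + (if i ∈ I then 1 else 0) - (if j ∈ I then 1 else 0) := by
  simp [sum_add_distrib, sum_sub_distrib, Pi.single_apply]

lemma LiesAbove.sub_single {d : ι → ℤ} (hd : LiesAbove ν d) {j : ι}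
    (hj : ∀ T : Finset ι, ∑ t ∈ T, d t = ν T → j ∉ T) : LiesAbove ν (d - Pi.single j 1) := by
  intro I
  have hI := hd I
  have hjI := hj I
  simp only [Pi.sub_apply, sum_sub_distrib, Pi.single_apply, sum_ite_eq']
  grind

lemma LiesAbove.add_single_sub_single {d : ι → ℤ} (hd : LiesAbove ν d) {i j : ι}
    (hij : ∀ T : Finset ι, ∑ t ∈ T, d t = ν T → j ∈ T → i ∈ T) :
    LiesAbove ν (d + Pi.single i 1 - Pi.single j 1) := by
  intro I
  have hI := hd I
  have hijI := hij I
  rw [sum_add_single_sub_single]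
  grind

lemma IsCircuit.two_le_union (h : IsNullity ν) {C C' : Finset ι} (hC : IsCircuit ν C)
    (hC' : IsCircuit ν C') (hne : C ≠ C') : 2 ≤ ν (C ∪ C') := by
  wlog hsub : ¬ C ⊆ C' generalizing C C'
  · rw [union_comm]
    exact this hC' hC hne.symm fun hsub' => hne ((not_not.mp hsub).antisymm hsub')
  obtain ⟨e, heC, heC'⟩ := not_subset.mp hsub
  have hinter : ν (C ∩ C') ≤ 0 := hC.2 e heC ▸ h.mono (show C ∩ C' ⊆ C.erase e by grind)
  have := h.supermodular C C'
  linarith [hC.1, hC'.1]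

lemma exists_isCircuit_subset (h : IsNullity ν) {I : Finset ι} (hI : ν I = 1) :
    ∃ C ⊆ I, IsCircuit ν C := by
  obtain ⟨C, hCI, hC⟩ := exists_minimal_le_of_wellFoundedLT (fun T => 0 < ν T) I (by simp [hI])
  refine ⟨C, hCI, le_antisymm (hI ▸ h.mono hCI) hC.prop, fun e he => ?_⟩
  refine le_antisymm (not_lt.mp fun hpos => ?_) (h.nonneg _)
  exact hC.not_prop_of_lt (erase_ssubset he) hpos

open Classical in
lemma card_circuits_subset (h : IsNullity ν) {I : Finset ι} (hI : ν I ≤ 1) :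
    (#{C ∈ I.powerset | IsCircuit ν C} : ℤ) = ν I := by
  rcases (h.nonneg I).eq_or_lt with hzero | hpos
  · rw [← hzero, Nat.cast_eq_zero, card_eq_zero, filter_eq_empty_iff]
    intro C hC hcirc
    have := h.mono (mem_powerset.mp hC)
    linarith [hcirc.1]
  · have hone : ν I = 1 := by omega
    obtain ⟨C, hCI, hC⟩ := exists_isCircuit_subset h hone
    rw [hone, Nat.cast_eq_one, card_eq_one]
    refine ⟨C, eq_singleton_iff_unique_mem.mpr ⟨by simp [hCI, hC], fun C' hC' => ?_⟩⟩
    rw [mem_filter, mem_powerset] at hC'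
    by_contra hne
    have := hC'.2.two_le_union h hC hne
    have := h.mono (union_subset hC'.1 hCI)
    omega

end Nullity

section Bases

variable {ι : Type*} [Fintype ι] {ν : Finset ι → ℤ}

/-- The bases of the contrapolymatroid of `ν`. For the nullity of a rank function `f` they are the
vectors `i ↦ f {i} - a i` with `a` a basis of the polymatroid of `f`. -/
def IsBase (ν : Finset ι → ℤ) (b : ι → ℤ) : Prop :=
  LiesAbove ν b ∧ ∑ i, b i = ν univ

variable [DecidableEq ι]

lemma IsBase.le (h : IsNullity ν) {b : ι → ℤ} (hb : IsBase ν b) (i : ι) : b i ≤ ν univ :=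
  hb.2 ▸ single_le_sum (fun j _ => hb.1.nonneg h j) (mem_univ i)

variable (ι) in
/-- The integer points of the cube `[0, M]^ι`. -/
noncomputable def cube (M : ℤ) : Finset (ι → ℤ) :=
  Fintype.piFinset fun _ => Icc 0 M

lemma mem_cube {M : ℤ} {d : ι → ℤ} : d ∈ cube ι M ↔ ∀ i, 0 ≤ d i ∧ d i ≤ M := by
  simp [cube]

open Classical in
/-- The finite set of all bases; for a nullity function the bounding box is no restriction
(`mem_bases`). -/
noncomputable def bases (ν : Finset ι → ℤ) : Finset (ι → ℤ) :=
  {b ∈ cube ι (ν univ) | IsBase ν b}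

lemma mem_bases (h : IsNullity ν) {b : ι → ℤ} : b ∈ bases ν ↔ IsBase ν b := by
  simp only [bases, mem_filter, mem_cube, and_iff_right_iff_imp]
  exact fun hb i => ⟨hb.1.nonneg h i, hb.le h i⟩

lemma IsBase.exchange (h : IsNullity ν) {b b' : ι → ℤ} (hb : IsBase ν b) (hb' : IsBase ν b')
    {i : ι} (hi : b i < b' i) :
    ∃ j, b' j < b j ∧ IsBase ν (b + Pi.single i 1 - Pi.single j 1) := by
  by_contra! hcon
  -- the largest `b`-tight set avoiding `i`; outside it, `b'` dominates `b`
  set U := ({T | ∑ t ∈ T, b t = ν T ∧ i ∉ T} : Finset (Finset ι)).sup id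
  have htight : ∑ t ∈ U, b t = ν U := hb.1.sum_sup_eq h (by simp +contextual)
  have hiU : i ∉ U := by simp [U, Finset.mem_sup]
  have hle : ∀ j ∈ Uᶜ, b j ≤ b' j := by
    refine fun j hj => not_lt.mp fun hlt => hcon j hlt ⟨?_, ?_⟩
    · refine hb.1.add_single_sub_single fun T hT hjT => by_contra fun hiT => ?_
      exact mem_compl.mp hj (le_sup (f := id) (b := T) (by simp [hT, hiT]) hjT)
    · simpa [hb.2] using sum_add_single_sub_single b i j univ
  have hlt : ∑ j ∈ Uᶜ, b j < ∑ j ∈ Uᶜ, b' j := sum_lt_sum hle ⟨i, mem_compl.mpr hiU, hi⟩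
  have := sum_add_sum_compl U b
  have := sum_add_sum_compl U b'
  linarith [hb'.1 U, hb.2, hb'.2]

lemma LiesAbove.exists_isBase_le (h : IsNullity ν) {d : ι → ℤ} (hd : LiesAbove ν d) :
    ∃ b ≤ d, IsBase ν b := by
  have hfin : {b | LiesAbove ν b ∧ b ≤ d}.Finite :=
    (Set.finite_Icc 0 d).subset fun b hb => ⟨hb.1.nonneg h, hb.2⟩
  obtain ⟨b, ⟨hb, hbd⟩, hmin⟩ := hfin.exists_minimal ⟨d, hd, le_rfl⟩
  refine ⟨b, hbd, hb, ?_⟩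
  have hcover (j : ι) : ∃ T, ∑ t ∈ T, b t = ν T ∧ j ∈ T := by
    by_contra! hj
    have hlt : b - Pi.single j 1 < b := sub_lt_self _ (by simp)
    exact hlt.not_ge (hmin ⟨hb.sub_single hj, hlt.le.trans hbd⟩ hlt.le)
  have hsup := hb.sum_sup_eq h (F := {T | ∑ t ∈ T, b t = ν T}) (by simp)
  rwa [show Finset.sup _ id = univ by simpa [eq_univ_iff_forall, Finset.mem_sup] using hcover]
    at hsup

end Bases

section Cells

variable {ι : Type*} [Fintype ι] [LinearOrder ι] {ν : Finset ι → ℤ}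

/-- Activity of `i` in the base `b`; under `b i = f {i} - a i` this is internal activity of `i`
in the basis `a` of the polymatroid. -/
def IsActive (ν : Finset ι → ℤ) (b : ι → ℤ) (i : ι) : Prop :=
  ∀ j < i, ¬ IsBase ν (b + Pi.single i 1 - Pi.single j 1)

/-- The cell of `b` consists of the vectors obtained from `b` by increasing active coordinates. -/
def InCell (ν : Finset ι → ℤ) (b d : ι → ℤ) : Prop :=
  b ≤ d ∧ ∀ i, b i < d i → IsActive ν b i

lemma LiesAbove.exists_inCell (h : IsNullity ν) {d : ι → ℤ} (hd : LiesAbove ν d) :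
    ∃ b, IsBase ν b ∧ InCell ν b d := by
  classical
  obtain ⟨b₀, hle₀, hb₀⟩ := hd.exists_isBase_le h
  obtain ⟨b, hb, hmin⟩ := exists_min_image {b ∈ bases ν | b ≤ d} toLex
    ⟨b₀, by simp [mem_bases h, hb₀, hle₀]⟩
  simp only [mem_filter, mem_bases h] at hb hmin
  refine ⟨b, hb.1, hb.2, fun i hi j hji hbase => ?_⟩
  refine (hmin _ ⟨hbase, fun t => ?_⟩).not_gt ⟨j, fun t ht => ?_, ?_⟩
  · have := hb.2 t
    simp only [Pi.add_apply, Pi.sub_apply, Pi.single_apply]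
    grind
  · simp [ht.ne, (ht.trans hji).ne]
  · simp [hji.ne]

lemma InCell.le_of_forall_gt (h : IsNullity ν) {b b' d : ι → ℤ} {i : ι} (hb : IsBase ν b)
    (hb' : IsBase ν b') (hbd : InCell ν b d) (hb'd : b' ≤ d) (hgt : ∀ j > i, b j = b' j) :
    b' i ≤ b i := by
  by_contra! hlt
  obtain ⟨j, hj, hbase⟩ := hb.exchange h hb' hlt
  have hji : j < i := lt_of_not_ge fun hij => by
    rcases hij.eq_or_lt with rfl | hij
    · exact hlt.asymm hj
    · exact hj.ne' (hgt j hij)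
  exact hbd.2 i (hlt.trans_le (hb'd i)) j hji hbase

lemma InCell.unique (h : IsNullity ν) {b b' d : ι → ℤ} (hb : IsBase ν b) (hb' : IsBase ν b')
    (hbd : InCell ν b d) (hb'd : InCell ν b' d) : b = b' := by
  funext i
  induction i using WellFoundedGT.induction with
  | ind i ih =>
    exact (hb'd.le_of_forall_gt h hb' hb hbd.1 fun j hj => (ih j hj).symm).antisymm
      (hbd.le_of_forall_gt h hb hb' hb'd.1 ih)

end Cells

section Weights

/-- The mass at `z` of the geometric distribution with success probability `X`, capped at `M`:
all the mass beyond `M` is put on `M`. -/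
noncomputable def geomWeight (M z : ℤ) : ℤ[X] :=
  (1 - X) ^ z.toNat * if z < M then X else 1

lemma sum_Icc_geomWeight {M a : ℤ} (ha : 0 ≤ a) (haM : a ≤ M) :
    ∑ z ∈ Icc a M, geomWeight M z = (1 - X) ^ a.toNat := by
  induction a, haM using Int.leInductionDown with
  | base => simp [geomWeight]
  | pred a haM ih =>
    have hstep : (1 - X : ℤ[X]) ^ a.toNat = (1 - X) ^ (a - 1).toNat * (1 - X) := by
      rw [← pow_succ, show (a - 1).toNat + 1 = a.toNat by omega]
    rw [← insert_Icc_left_eq_Icc_sub_one (by omega), sum_insert (by simp), ih (by omega), hstep,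
      geomWeight, if_pos (by omega)]
    ring

variable {ι : Type*} [Fintype ι]

/-- The product of the capped geometric weights of the coordinates of `d`. -/
noncomputable def cubeWeight (M : ℤ) (d : ι → ℤ) : ℤ[X] :=
  ∏ i, geomWeight M (d i)

lemma X_pow_dvd_cubeWeight (M : ℤ) (d : ι → ℤ) : (X : ℤ[X]) ^ #{i | d i < M} ∣ cubeWeight M d := by
  rw [← prod_const, cubeWeight]
  refine (prod_dvd_prod_of_dvd _ _ fun i hi => ?_).trans
    (prod_dvd_prod_of_subset _ _ _ (subset_univ _))
  simp_all [geomWeight]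

variable [DecidableEq ι]

lemma sum_piFinset_cubeWeight (M : ℤ) (s : ι → Finset ℤ) :
    ∑ d ∈ Fintype.piFinset s, cubeWeight M d = ∏ i, ∑ z ∈ s i, geomWeight M z :=
  (prod_univ_sum s fun _ => geomWeight M).symm

lemma sum_cube_cubeWeight {M : ℤ} (hM : 0 ≤ M) : ∑ d ∈ cube ι M, cubeWeight M d = 1 := by
  simp [cube, sum_piFinset_cubeWeight, sum_Icc_geomWeight le_rfl hM]

lemma sum_cube_cubeWeight_of_eq_zero {M : ℤ} (hM : 0 < M) (C : Finset ι) :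
    ∑ d ∈ cube ι M with ∀ i ∈ C, d i = 0, cubeWeight M d = X ^ #C := by
  have hface : {d ∈ cube ι M | ∀ i ∈ C, d i = 0} =
      Fintype.piFinset fun i => if i ∈ C then {0} else Icc 0 M := by
    ext d
    simp only [mem_filter, mem_cube, Fintype.mem_piFinset]
    grind
  have hfactor (i : ι) : ∑ z ∈ (if i ∈ C then {0} else Icc 0 M), geomWeight M z =
      if i ∈ C then X else 1 := by
    split_ifs
    · simp [geomWeight, hM]
    · simp [sum_Icc_geomWeight le_rfl hM.le]
  simp [hface, sum_piFinset_cubeWeight, hfactor, prod_ite_mem]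

end Weights

section CellWeights

variable {ι : Type*} [Fintype ι] [LinearOrder ι] {ν : Finset ι → ℤ} {M : ℤ}

open Classical in
lemma IsBase.sum_cell_cubeWeight (h : IsNullity ν) (hM : ν univ < M) {b : ι → ℤ}
    (hb : IsBase ν b) :
    ∑ d ∈ cube ι M with InCell ν b d, cubeWeight M d =
      (1 - X) ^ (ν univ).toNat * X ^ #{i | ¬ IsActive ν b i} := by
  have hnonneg (i : ι) : 0 ≤ b i := hb.1.nonneg h i
  have hlt (i : ι) : b i < M := (hb.le h i).trans_lt hM
  have hcell : {d ∈ cube ι M | InCell ν b d} =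
      Fintype.piFinset fun i => if IsActive ν b i then Icc (b i) M else {b i} := by
    ext d
    simp only [mem_filter, mem_cube, InCell, Fintype.mem_piFinset, Pi.le_def, ← forall_and]
    refine forall_congr' fun i => ?_
    have := hnonneg i
    have := hlt i
    split_ifs with hi <;> simp only [hi, mem_Icc, mem_singleton] <;> grind
  have hfactor (i : ι) :
      ∑ z ∈ (if IsActive ν b i then Icc (b i) M else {b i}), geomWeight M z =
        (1 - X) ^ (b i).toNat * if ¬ IsActive ν b i then X else 1 := by
    split_ifs
    · simp [sum_Icc_geomWeight (hnonneg i) (hlt i).le]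
    · simp [geomWeight, hlt i]
  have hsum : ∑ i, (b i).toNat = (ν univ).toNat := by
    zify
    simp_rw [Int.toNat_of_nonneg (h.nonneg univ), Int.toNat_of_nonneg (hnonneg _), hb.2]
  simp only [hcell, sum_piFinset_cubeWeight, hfactor, prod_mul_distrib, prod_pow_eq_pow_sum, hsum,
    ← prod_filter, prod_const]

open Classical in
lemma sum_liesAbove_cubeWeight (h : IsNullity ν) (hM : ν univ < M) :
    ∑ d ∈ cube ι M with LiesAbove ν d, cubeWeight M d =
      (1 - X) ^ (ν univ).toNat * ∑ b ∈ bases ν, X ^ #{i | ¬ IsActive ν b i} := by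
  have hcells : {d ∈ cube ι M | LiesAbove ν d} =
      (bases ν).biUnion fun b => {d ∈ cube ι M | InCell ν b d} := by
    ext d
    simp only [mem_filter, mem_biUnion, mem_bases h]
    constructor
    · rintro ⟨hcube, hd⟩
      obtain ⟨b, hb, hbd⟩ := hd.exists_inCell h
      exact ⟨b, hb, hcube, hbd⟩
    · rintro ⟨b, hb, hcube, hbd⟩
      exact ⟨hcube, hb.1.mono hbd.1⟩
  rw [hcells, sum_biUnion, mul_sum]
  · exact sum_congr rfl fun b hb => ((mem_bases h).mp hb).sum_cell_cubeWeight h hM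
  · refine fun b hb b' hb' hne => disjoint_left.mpr fun d hd hd' => hne ?_
    exact (mem_filter.mp hd).2.unique h ((mem_bases h).mp hb) ((mem_bases h).mp hb')
      (mem_filter.mp hd').2

end CellWeights

section Truncation

variable {ι : Type*} [Fintype ι] [DecidableEq ι] {ν : Finset ι → ℤ} {M : ℤ}

lemma liesAbove_iff_of_mem_cube (h : IsNullity ν) (hM : ν univ < M) {d : ι → ℤ} (hd : d ∈ cube ι M)
    (hlt : ν {i | d i < M} ≤ 1) : LiesAbove ν d ↔ ν {i | d i = 0} = 0 := by
  rw [mem_cube] at hd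
  have hle_sum (I : Finset ι) (i : ι) (hi : i ∈ I) : d i ≤ ∑ t ∈ I, d t :=
    single_le_sum (fun t _ => (hd t).1) hi
  refine ⟨fun habove => (h.nonneg _).antisymm' ?_, fun hzero I => ?_⟩
  · exact (habove {i | d i = 0}).trans_eq (sum_eq_zero fun i hi => (mem_filter.mp hi).2)
  · by_cases hcap : ∃ i ∈ I, d i = M
    · obtain ⟨i, hi, hiM⟩ := hcap
      linarith [hle_sum I i hi, h.mono (subset_univ I)]
    by_cases hpos : ∃ i ∈ I, 0 < d i
    · obtain ⟨i, hi, hpos⟩ := hpos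
      have hI : I ⊆ ({i | d i < M} : Finset ι) := fun t ht => by grind
      linarith [hle_sum I i hi, h.mono hI]
    · have hI : I ⊆ ({i | d i = 0} : Finset ι) := fun t ht => by grind
      exact (h.mono hI).trans (hzero.le.trans (sum_nonneg fun t _ => (hd t).1))

open Classical in
lemma indicator_liesAbove_add_card_circuits (h : IsNullity ν) (hM : ν univ < M) {d : ι → ℤ}
    (hd : d ∈ cube ι M) (hlt : ν {i | d i < M} ≤ 1) :
    (if LiesAbove ν d then 1 else 0) + (#{C | IsCircuit ν C ∧ ∀ i ∈ C, d i = 0} : ℤ) = 1 := by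
  have hsub : ({i | d i = 0} : Finset ι) ⊆ ({i | d i < M} : Finset ι) :=
    monotone_filter_right _ fun i _ hi => by linarith [h.nonneg univ]
  have hzero : ν {i | d i = 0} ≤ 1 := (h.mono hsub).trans hlt
  have hfilter : ({C | IsCircuit ν C ∧ ∀ i ∈ C, d i = 0} : Finset (Finset ι)) =
      {C ∈ powerset {i | d i = 0} | IsCircuit ν C} := by
    ext C
    simp [subset_iff, and_comm]
  rw [hfilter, card_circuits_subset h hzero, liesAbove_iff_of_mem_cube h hM hd hlt]
  have := h.nonneg {i | d i = 0}
  split_ifs <;> omega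

open Classical in
lemma X_pow_dvd_sum_liesAbove_cubeWeight_sub (h : IsNullity ν) (hM : ν univ < M) {k : ℕ}
    (hk : ∀ H : Finset ι, #H ≤ k → ν H ≤ 1) :
    (X : ℤ[X]) ^ (k + 1) ∣ ∑ d ∈ cube ι M with LiesAbove ν d, cubeWeight M d -
      (1 - ∑ C with IsCircuit ν C, X ^ #C) := by
  have hMpos : 0 < M := (h.nonneg univ).trans_lt hM
  have hcircuits : ∑ C with IsCircuit ν C, (X : ℤ[X]) ^ #C =
      ∑ d ∈ cube ι M, #{C | IsCircuit ν C ∧ ∀ i ∈ C, d i = 0} * cubeWeight M d := by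
    simp_rw [← sum_cube_cubeWeight_of_eq_zero hMpos, sum_filter (s := cube ι M)]
    rw [sum_comm]
    refine sum_congr rfl fun d _ => ?_
    rw [← sum_filter, sum_const, filter_filter, nsmul_eq_mul]
  rw [← sum_cube_cubeWeight (ι := ι) hMpos.le, hcircuits, sum_filter, ← sum_sub_distrib,
    ← sum_sub_distrib]
  refine dvd_sum fun d hd => ?_
  rcases le_or_gt #{i | d i < M} k with hle | hgt
  · have hone := congrArg (fun n : ℤ => (n : ℤ[X]) * cubeWeight M d)
      (indicator_liesAbove_add_card_circuits h hM hd (hk _ hle))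
    simp only [Int.cast_add, Int.cast_ite, Int.cast_one, Int.cast_zero, Int.cast_natCast,
      add_mul, ite_mul, one_mul, zero_mul] at hone
    convert dvd_zero _ using 1
    linear_combination hone
  · have hdvd := (pow_dvd_pow X hgt).trans (X_pow_dvd_cubeWeight M d)
    refine dvd_sub ?_ (dvd_sub hdvd (hdvd.mul_left _))
    split_ifs
    exacts [hdvd, dvd_zero _]

end Truncation

section Inversion

variable {R : Type*} [CommRing R]

lemma coeff_invOneSubPow (g t : ℕ) :
    PowerSeries.coeff t (PowerSeries.invOneSubPow R g).val = ((g + t - 1).choose t : R) := by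
  rcases g with _ | g
  · rcases t with _ | t <;> simp [PowerSeries.invOneSubPow_zero, PowerSeries.coeff_one]
  · rw [PowerSeries.invOneSubPow_val_succ_eq_mk_add_choose, PowerSeries.coeff_mk,
      show g + 1 + t - 1 = g + t by omega, Nat.choose_symm_add]

lemma coeff_eq_sum_choose_mul_coeff_one_sub_X_pow_mul (P : R[X]) (g k : ℕ) :
    P.coeff k =
      ∑ j ∈ range (k + 1), ((g + k - 1 - j).choose (k - j) : R) * ((1 - X) ^ g * P).coeff j := by
  have hinv : (PowerSeries.invOneSubPow R g).val * (((1 - X) ^ g * P : R[X]) : PowerSeries R) =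
      P := by
    rw [Polynomial.coe_mul, Polynomial.coe_pow, Polynomial.coe_sub, Polynomial.coe_one,
      Polynomial.coe_X, ← PowerSeries.invOneSubPow_inv_eq_one_sub_pow, ← mul_assoc,
      Units.val_inv, one_mul]
  rw [← Polynomial.coeff_coe, ← hinv, mul_comm, PowerSeries.coeff_mul,
    Nat.sum_antidiagonal_eq_sum_range_succ_mk]
  refine sum_congr rfl fun j hj => ?_
  rw [coeff_invOneSubPow, Polynomial.coeff_coe, mul_comm]
  congr 3
  have := mem_range_succ_iff.mp hj
  omega

end Inversion

section NullityCoefficients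

variable {ι : Type*} [Fintype ι] [LinearOrder ι] {ν : Finset ι → ℤ}

open Classical in
lemma coeff_sum_bases (h : IsNullity ν) {k g : ℕ} (hk : ∀ H : Finset ι, #H ≤ k → ν H ≤ 1)
    (hg : ν univ = g) :
    (∑ b ∈ bases ν, (X : ℤ[X]) ^ #{i | ¬ IsActive ν b i}).coeff k =
      ((g + k - 1).choose k : ℤ) - ∑ j ∈ range (k + 1),
        ((g + k - 1 - j).choose (k - j) : ℤ) * #{C | #C = j ∧ IsCircuit ν C} := by
  have hdvd := X_pow_dvd_sum_liesAbove_cubeWeight_sub h (lt_add_one (ν univ)) hk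
  rw [sum_liesAbove_cubeWeight h (lt_add_one _), X_pow_dvd_iff] at hdvd
  have hcoeff (j : ℕ) (hj : j ∈ range (k + 1)) :
      ((1 - X) ^ g * ∑ b ∈ bases ν, (X : ℤ[X]) ^ #{i | ¬ IsActive ν b i}).coeff j =
        (if j = 0 then 1 else 0) - (#{C | #C = j ∧ IsCircuit ν C} : ℤ) := by
    have := hdvd j (mem_range.mp hj)
    rw [coeff_sub, sub_eq_zero, hg, Int.toNat_natCast] at this
    rw [this, coeff_sub, coeff_one, finsetSum_coeff]
    simp_rw [coeff_X_pow, sum_boole, filter_filter, @eq_comm ℕ j, and_comm]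
  rw [coeff_eq_sum_choose_mul_coeff_one_sub_X_pow_mul _ g k,
    sum_congr rfl fun j hj => congrArg _ (hcoeff j hj)]
  simp [mul_sub]

end NullityCoefficients

section Polymatroid

variable {n : ℕ} {f : Finset (Fin n) → ℕ}

/-- The nullity of a set in a polymatroid with rank function `f`, i.e. the failure of `f` to be
additive on it. -/
def nullity (f : Finset (Fin n) → ℕ) (I : Finset (Fin n)) : ℤ :=
  ∑ i ∈ I, (f {i} : ℤ) - f I

lemma IsPolymatroidRank.isNullity (hf : IsPolymatroidRank n f) : IsNullity (nullity f) where
  empty := by simp [nullity, hf.1]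
  singleton i := by simp [nullity]
  supermodular I J := by
    have hsub := hf.2.2 I J
    have := sum_union_inter (s₁ := I) (s₂ := J) (f := fun i => (f {i} : ℤ))
    simp only [nullity]
    zify at hsub
    linarith

lemma isBase_nullity_iff (a : Fin n → ℤ) :
    IsBase (nullity f) (fun i => f {i} - a i) ↔
      (∀ I : Finset (Fin n), ∑ i ∈ I, a i ≤ f I) ∧ ∑ i, a i = f univ := by
  simp only [IsBase, LiesAbove, nullity, sum_sub_distrib]
  exact and_congr (forall_congr' fun I => by constructor <;> intro <;> linarith)
    (by constructor <;> intro <;> linarith)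

lemma mem_polyBases_iff (hf : IsPolymatroidRank n f) (a : Fin n → ℤ) :
    a ∈ polyBases n f ↔ IsBase (nullity f) (fun i => f {i} - a i) := by
  simp only [isBase_nullity_iff, polyBases, mem_filter, mem_image, mem_univ, true_and]
  refine ⟨fun h => h.2.2, fun ⟨hle, hsum⟩ => ?_⟩
  have hnonneg (i : Fin n) : 0 ≤ a i := by
    have := hle (univ.erase i)
    have : (f (univ.erase i) : ℤ) ≤ f univ := by exact_mod_cast hf.2.1 _ _ (subset_univ _)
    linarith [add_sum_erase univ a (mem_univ i)]
  have hbound (i : Fin n) : a i ≤ f univ :=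
    hsum ▸ single_le_sum (fun j _ => hnonneg j) (mem_univ i)
  refine ⟨⟨fun i => ⟨(a i).toNat, ?_⟩, ?_⟩, hnonneg, hle, hsum⟩
  · have := hbound i
    omega
  · simp [hnonneg]

lemma mem_intAct_iff (hf : IsPolymatroidRank n f) (a : Fin n → ℤ) (i : Fin n) :
    i ∈ intAct n f a ↔ IsActive (nullity f) (fun i => f {i} - a i) i := by
  simp only [intAct, mem_filter, mem_univ, true_and, IsActive, mem_polyBases_iff hf]
  refine forall₂_congr fun j _ => not_congr (iff_of_eq (congrArg _ (funext fun t => ?_)))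
  simp only [Pi.add_apply, Pi.sub_apply, Pi.single_apply]
  ring

open Classical in
lemma interiorPoly_eq_sum_bases (hf : IsPolymatroidRank n f) :
    interiorPoly n f =
      ∑ b ∈ bases (nullity f), X ^ #{i | ¬ IsActive (nullity f) b i} := by
  refine sum_nbij' (fun a i => f {i} - a i) (fun b i => f {i} - b i) (fun a ha => ?_)
    (fun b hb => ?_) (fun a _ => by simp) (fun b _ => by simp) (fun a _ => ?_)
  · exact (mem_bases hf.isNullity).mpr ((mem_polyBases_iff hf a).mp ha)
  · rw [mem_polyBases_iff hf]
    simpa using (mem_bases hf.isNullity).mp hb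
  · simp_rw [← mem_intAct_iff hf, filter_not, filter_univ_mem, ← compl_eq_univ_sdiff, card_compl,
      Fintype.card_fin]

lemma mem_Cset_iff {C : Finset (Fin n)} {j : ℕ} :
    C ∈ Cset n f j ↔ #C = j ∧ IsCircuit (nullity f) C := by
  simp only [Cset, IsCircuit, nullity, mem_filter, mem_univ, true_and, sub_eq_zero]

theorem coeff_interiorPoly (hf : IsPolymatroidRank n f) {k g : ℕ}
    (hk : ∀ H : Finset (Fin n), #H ≤ k → nullity f H ≤ 1) (hg : nullity f univ = g) :
    (interiorPoly n f).coeff k =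
      ((g + k - 1).choose k : ℤ) -
        ∑ j ∈ range (k + 1), ((g + k - 1 - j).choose (k - j) : ℤ) * #(Cset n f j) := by
  classical
  have hCset (j : ℕ) : Cset n f j =
      ({C | #C = j ∧ IsCircuit (nullity f) C} : Finset (Finset (Fin n))) := by
    ext C
    rw [mem_Cset_iff, mem_filter_univ]
  simp_rw [interiorPoly_eq_sum_bases hf, coeff_sum_bases hf.isNullity hk hg, hCset]

end Polymatroid

section CyclomaticNumber

variable {W : Type*}

lemma card_connectedComponent_eq_one {G : SimpleGraph W} (hG : G.Connected) :
    Nat.card G.ConnectedComponent = 1 :=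
  Nat.card_eq_one_iff_unique.mpr
    ⟨hG.preconnected.subsingleton_connectedComponent, hG.nonempty.map G.connectedComponentMk⟩

/-- The space of real functions on the vertices that are constant on every component of `G`; its
dimension is the number of components. -/
def locallyConstant (G : SimpleGraph W) : Submodule ℝ (W → ℝ) where
  carrier := {x | ∀ u v, G.Adj u v → x u = x v}
  add_mem' hx hy u v h := congrArg₂ (· + ·) (hx u v h) (hy u v h)
  zero_mem' _ _ _ := rfl
  smul_mem' c _ hx u v h := congrArg (c * ·) (hx u v h)

lemma eq_of_mem_locallyConstant {G : SimpleGraph W} {x : W → ℝ} (hx : x ∈ locallyConstant G)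
    {u v : W} (h : G.Reachable u v) : x u = x v := by
  obtain ⟨p⟩ := h
  induction p with
  | nil => rfl
  | cons hadj _ ih => exact (hx _ _ hadj).trans ih

lemma locallyConstant_anti : Antitone (locallyConstant (W := W)) :=
  fun _ _ h _ hx u v huv => hx u v (h huv)

lemma locallyConstant_sup (G G' : SimpleGraph W) :
    locallyConstant (G ⊔ G') = locallyConstant G ⊓ locallyConstant G' :=
  le_antisymm (le_inf (locallyConstant_anti le_sup_left) (locallyConstant_anti le_sup_right))
    fun _ hx u v huv => huv.elim (hx.1 u v) (hx.2 u v)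

lemma locallyConstant_deleteEdges_of_not_isBridge {G : SimpleGraph W} {e : Sym2 W}
    (hbridge : ¬ G.IsBridge e) : locallyConstant (G.deleteEdges {e}) = locallyConstant G := by
  refine le_antisymm (fun x hx u v huv => ?_) (locallyConstant_anti (G.deleteEdges_le {e}))
  by_cases heq : s(u, v) = e
  · subst heq
    exact eq_of_mem_locallyConstant hx (not_not.mp (mt SimpleGraph.isBridge_iff.mpr hbridge))
  · exact hx u v (SimpleGraph.deleteEdges_adj.mpr ⟨huv, heq⟩)

variable [Finite W]

lemma finrank_locallyConstant (G : SimpleGraph W) :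
    Module.finrank ℝ (locallyConstant G) = Nat.card G.ConnectedComponent := by
  classical
  have := Fintype.ofFinite W
  have hker : locallyConstant G = (G.lapMatrix ℝ).toLin'.ker := by
    ext x
    rw [LinearMap.mem_ker, Matrix.toLin'_apply, G.lapMatrix_mulVec_eq_zero_iff_forall_adj]
    rfl
  rw [hker, Nat.card_eq_fintype_card, G.card_connectedComponent_eq_finrank_ker_toLin'_lapMatrix]

lemma card_connectedComponent_supermodular (G G' : SimpleGraph W) :
    Nat.card G.ConnectedComponent + Nat.card G'.ConnectedComponent ≤
      Nat.card (G ⊔ G').ConnectedComponent + Nat.card (G ⊓ G').ConnectedComponent := by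
  have := Fintype.ofFinite W
  have hle : locallyConstant G ⊔ locallyConstant G' ≤ locallyConstant (G ⊓ G') :=
    sup_le (locallyConstant_anti inf_le_left) (locallyConstant_anti inf_le_right)
  simp only [← finrank_locallyConstant]
  rw [locallyConstant_sup]
  have := Submodule.finrank_sup_add_finrank_inf_eq (locallyConstant G) (locallyConstant G')
  have := Submodule.finrank_mono hle
  omega

lemma card_connectedComponent_lt {G G' : SimpleGraph W} (hle : G ≤ G') {u v : W}
    (huv : ¬ G.Reachable u v) (huv' : G'.Reachable u v) :
    Nat.card G'.ConnectedComponent < Nat.card G.ConnectedComponent := by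
  have := Fintype.ofFinite G.ConnectedComponent
  have := Fintype.ofFinite G'.ConnectedComponent
  rw [Nat.card_eq_fintype_card, Nat.card_eq_fintype_card]
  exact Fintype.card_lt_of_surjective_not_injective _
    (SimpleGraph.ConnectedComponent.surjective_map_ofLE hle) fun hinj =>
      huv (SimpleGraph.ConnectedComponent.exact (hinj (SimpleGraph.ConnectedComponent.sound huv')))

/-- The cyclomatic number (first Betti number) of a finite graph. -/
noncomputable def cyclomaticNumber (G : SimpleGraph W) : ℤ :=
  Nat.card G.edgeSet + Nat.card G.ConnectedComponent - Nat.card W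

lemma cyclomaticNumber_nonneg (G : SimpleGraph W) : 0 ≤ cyclomaticNumber G := by
  classical
  have := Fintype.ofFinite W
  -- The coboundary, with respect to an arbitrary orientation of the edges.
  let δ : (W → ℝ) →ₗ[ℝ] (G.edgeSet → ℝ) :=
    LinearMap.funLeft ℝ ℝ (fun e => e.1.out.1) - LinearMap.funLeft ℝ ℝ (fun e => e.1.out.2)
  have hker : δ.ker ≤ locallyConstant G := by
    intro x hx u v huv
    have hout : s((s(u, v) : Sym2 W).out.1, (s(u, v) : Sym2 W).out.2) = s(u, v) := Quot.out_eq _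
    have heq : x (s(u, v) : Sym2 W).out.1 = x (s(u, v) : Sym2 W).out.2 :=
      sub_eq_zero.mp (congrFun hx ⟨s(u, v), huv⟩)
    rcases Sym2.eq_iff.mp hout with ⟨hu, hv⟩ | ⟨hv, hu⟩
    · rwa [hu, hv] at heq
    · rw [hv, hu] at heq
      exact heq.symm
  have := δ.finrank_range_add_finrank_ker
  have := Submodule.finrank_mono hker
  have := Submodule.finrank_le δ.range
  simp only [Module.finrank_fintype_fun_eq_card, finrank_locallyConstant,
    ← Nat.card_eq_fintype_card] at *
  rw [cyclomaticNumber]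
  omega

lemma card_edgeSet_deleteEdges_singleton {G : SimpleGraph W} {e : Sym2 W} (he : e ∈ G.edgeSet) :
    Nat.card (G.deleteEdges {e}).edgeSet + 1 = Nat.card G.edgeSet := by
  rw [SimpleGraph.edgeSet_deleteEdges]
  exact Set.ncard_sdiff_singleton_add_one he (Set.toFinite _)

lemma cyclomaticNumber_le_deleteEdges_of_isBridge {G : SimpleGraph W} {e : Sym2 W}
    (he : e ∈ G.edgeSet) (hbridge : G.IsBridge e) :
    cyclomaticNumber G ≤ cyclomaticNumber (G.deleteEdges {e}) := by
  have hcard := card_edgeSet_deleteEdges_singleton he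
  induction e using Sym2.ind with | _ u v =>
  have := card_connectedComponent_lt (G.deleteEdges_le {s(u, v)})
    (SimpleGraph.isBridge_iff.mp hbridge) (SimpleGraph.Adj.reachable he)
  rw [cyclomaticNumber, cyclomaticNumber]
  omega

lemma cyclomaticNumber_deleteEdges_of_not_isBridge {G : SimpleGraph W} {e : Sym2 W}
    (he : e ∈ G.edgeSet) (hbridge : ¬ G.IsBridge e) :
    cyclomaticNumber (G.deleteEdges {e}) + 1 = cyclomaticNumber G := by
  rw [cyclomaticNumber, cyclomaticNumber, ← card_edgeSet_deleteEdges_singleton he,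
    ← finrank_locallyConstant, ← finrank_locallyConstant,
    locallyConstant_deleteEdges_of_not_isBridge hbridge]
  push_cast
  ring

lemma cyclomaticNumber_eq_zero_of_isAcyclic {G : SimpleGraph W} (hG : G.IsAcyclic) :
    cyclomaticNumber G = 0 := by
  refine le_antisymm ?_ (cyclomaticNumber_nonneg G)
  induction hk : Nat.card G.edgeSet generalizing G with
  | zero =>
    have := Nat.card_le_card_of_surjective G.connectedComponentMk Quot.mk_surjective
    rw [cyclomaticNumber]
    omega
  | succ k ih =>
    obtain ⟨e, he⟩ : G.edgeSet.Nonempty :=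
      Set.nonempty_of_ncard_ne_zero (hk.trans_ne k.succ_ne_zero)
    refine (cyclomaticNumber_le_deleteEdges_of_isBridge he
      (SimpleGraph.isAcyclic_iff_forall_isBridge.mp hG he)).trans
        (ih (hG.anti (G.deleteEdges_le {e})) ?_)
    have := card_edgeSet_deleteEdges_singleton he
    omega

end CyclomaticNumber

section Cycles

variable {W : Type*}

/-- The cycles of `G`, encoded by their edge sets, so that closed walks which differ only in base
point or direction are identified. -/
def cycleEdgeSets (G : SimpleGraph W) : Set (Set (Sym2 W)) :=
  {S | ∃ (u : W) (w : G.Walk u u), w.IsCycle ∧ w.edgeSet = S}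

lemma ncard_edgeSet_of_isCycle {G : SimpleGraph W} {u : W} {w : G.Walk u u} (hw : w.IsCycle) :
    w.edgeSet.ncard = w.length := by
  classical
  rw [← w.coe_edges_toFinset, Set.ncard_coe_finset,
    List.toFinset_card_of_nodup hw.isCircuit.isTrail.edges_nodup, w.length_edges]

lemma mem_cycleEdgeSets_iff_of_le {G G' : SimpleGraph W} (hle : G ≤ G') {S : Set (Sym2 W)} :
    S ∈ cycleEdgeSets G ↔ S ∈ cycleEdgeSets G' ∧ S ⊆ G.edgeSet := by
  constructor
  · rintro ⟨u, w, hw, rfl⟩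
    exact ⟨⟨u, w.mapLe hle, hw.mapLe hle, w.edgeSet_mapLe_eq_edgeSet hle⟩, w.edges_subset_edgeSet⟩
  · rintro ⟨⟨u, w, hw, rfl⟩, hsub⟩
    exact ⟨u, w.transfer G hsub, hw.transfer hsub, w.edgeSet_transfer hsub⟩

lemma image_sym2Map_val_injective (s : Set W) :
    Function.Injective (Sym2.map (Subtype.val : s → W) '' ·) :=
  (Sym2.map.injective Subtype.val_injective).image_injective

lemma image_cycleEdgeSets_induce {G : SimpleGraph W} {s : Set W} (hs : G.support ⊆ s) :
    (Sym2.map Subtype.val '' ·) '' cycleEdgeSets (G.induce s) = cycleEdgeSets G := by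
  ext S
  constructor
  · rintro ⟨_, ⟨u, w, hw, rfl⟩, rfl⟩
    exact ⟨u, w.map (SimpleGraph.Embedding.induce s).toHom, hw.map Subtype.val_injective,
      w.edgeSet_map _⟩
  · rintro ⟨u, w, hw, rfl⟩
    have hmem (x : W) (hx : x ∈ w.support) : x ∈ s := by
      obtain ⟨e, he, y, rfl⟩ := (w.mem_support_iff_exists_mem_edges_of_not_nil hw.not_nil).mp hx
      exact hs ⟨y, w.edges_subset_edgeSet he⟩
    have hmap := w.map_induce hmem
    exact ⟨_, ⟨_, w.induce s hmem, .of_map (hmap ▸ hw), rfl⟩,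
      (SimpleGraph.Walk.edgeSet_map _ _).symm.trans (congrArg _ hmap)⟩

lemma nonempty_of_mem_cycleEdgeSets {G : SimpleGraph W} {S : Set (Sym2 W)}
    (hS : S ∈ cycleEdgeSets G) : S.Nonempty := by
  obtain ⟨u, w, hw, rfl⟩ := hS
  exact List.exists_mem_of_ne_nil _ (mt SimpleGraph.Walk.edges_eq_nil.mp hw.not_nil)

open Classical in
lemma degree_toSubgraph_of_isCycle [Fintype W] {G : SimpleGraph W} {u : W} {w : G.Walk u u}
    (hw : w.IsCycle) (v : W) :
    w.toSubgraph.spanningCoe.degree v = if ∃ e ∈ w.edgeSet, v ∈ e then 2 else 0 := by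
  split_ifs with hv
  · have hsupp := (w.mem_support_iff_exists_mem_edges_of_not_nil hw.not_nil).mpr hv
    rw [← hw.ncard_neighborSet_toSubgraph_eq_two hsupp, ← SimpleGraph.card_neighborSet_eq_degree,
      ← Nat.card_eq_fintype_card]
    rfl
  · rw [SimpleGraph.degree_eq_zero_iff_notMem_support]
    rintro ⟨x, hx⟩
    exact hv ⟨s(v, x), w.mem_edges_toSubgraph.mp hx, Sym2.mem_mk_left v x⟩

open Classical in
lemma ncard_of_mem_cycleEdgeSets_of_isBipartiteWith [Finite W] {G : SimpleGraph W} {s t : Finset W}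
    (hG : G.IsBipartiteWith s t) {S : Set (Sym2 W)} (hS : S ∈ cycleEdgeSets G) :
    S.ncard = 2 * #{v ∈ t | ∃ e ∈ S, v ∈ e} := by
  have := Fintype.ofFinite W
  obtain ⟨u, w, hw, rfl⟩ := hS
  have hsub : w.toSubgraph.spanningCoe.IsBipartiteWith s t :=
    ⟨hG.disjoint, fun _ _ h => hG.mem_of_adj h.adj_sub⟩
  have hsum := SimpleGraph.isBipartiteWith_sum_degrees_eq_card_edges' hsub
  simp_rw [degree_toSubgraph_of_isCycle hw, sum_ite, sum_const_zero, add_zero, sum_const,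
    smul_eq_mul, mul_comm _ 2] at hsum
  rw [SimpleGraph.edgeFinset, ← Set.ncard_eq_toFinset_card',
    SimpleGraph.Subgraph.edgeSet_spanningCoe, w.edgeSet_toSubgraph] at hsum
  convert hsum.symm

variable [Finite W]

lemma cyclomaticNumber_deleteEdges_of_mem {G : SimpleGraph W} {S : Set (Sym2 W)}
    (hS : S ∈ cycleEdgeSets G) {e : Sym2 W} (he : e ∈ S) :
    cyclomaticNumber (G.deleteEdges {e}) + 1 = cyclomaticNumber G := by
  obtain ⟨u, w, hw, rfl⟩ := hS
  exact cyclomaticNumber_deleteEdges_of_not_isBridge (w.edges_subset_edgeSet he)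
    fun hbridge => hbridge.notMem_edges_of_isCycle hw he

lemma nonempty_cycleEdgeSets_iff {G : SimpleGraph W} :
    (cycleEdgeSets G).Nonempty ↔ 0 < cyclomaticNumber G := by
  constructor
  · rintro ⟨S, hS⟩
    obtain ⟨e, he⟩ := nonempty_of_mem_cycleEdgeSets hS
    have := cyclomaticNumber_deleteEdges_of_mem hS he
    have := cyclomaticNumber_nonneg (G.deleteEdges {e})
    omega
  · intro hpos
    have hcyclic : ¬ G.IsAcyclic := mt cyclomaticNumber_eq_zero_of_isAcyclic hpos.ne'
    rw [SimpleGraph.IsAcyclic] at hcyclic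
    push Not at hcyclic
    obtain ⟨u, w, hw⟩ := hcyclic
    exact ⟨_, u, w, hw, rfl⟩

lemma nontrivial_cycleEdgeSets {G : SimpleGraph W} (hG : 2 ≤ cyclomaticNumber G) :
    (cycleEdgeSets G).Nontrivial := by
  obtain ⟨S, hS⟩ := nonempty_cycleEdgeSets_iff.mpr (zero_lt_two.trans_le hG)
  obtain ⟨e, he⟩ := nonempty_of_mem_cycleEdgeSets hS
  have := cyclomaticNumber_deleteEdges_of_mem hS he
  obtain ⟨S', hS'⟩ : (cycleEdgeSets (G.deleteEdges {e})).Nonempty :=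
    nonempty_cycleEdgeSets_iff.mpr (by omega)
  obtain ⟨hS'G, hsub⟩ := (mem_cycleEdgeSets_iff_of_le (G.deleteEdges_le {e})).mp hS'
  have he' : e ∉ S' := fun h => by simpa using hsub h
  exact ⟨S', hS'G, S, hS, fun heq => he' (heq ▸ he)⟩

lemma card_connectedComponent_induce {G : SimpleGraph W} {s : Set W} (hs : G.support ⊆ s) :
    Nat.card G.ConnectedComponent = Nat.card (G.induce s).ConnectedComponent + sᶜ.ncard := by
  classical
  have := Fintype.ofFinite W
  let restrict : locallyConstant G ≃ₗ[ℝ] locallyConstant (G.induce s) × ((sᶜ : Set W) → ℝ) :=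
    { toFun x := (⟨fun w => x.1 w, fun u v huv => x.2 u v huv⟩, fun w => x.1 w)
      map_add' _ _ := rfl
      map_smul' _ _ := rfl
      invFun y := ⟨fun w => if hw : w ∈ s then y.1.1 ⟨w, hw⟩ else y.2 ⟨w, hw⟩, fun u v huv => by
        have hu : u ∈ s := hs ⟨v, huv⟩
        have hv : v ∈ s := hs ⟨u, huv.symm⟩
        simpa only [hu, hv, dif_pos] using y.1.2 ⟨u, hu⟩ ⟨v, hv⟩ huv⟩
      left_inv x := by ext w; simp
      right_inv y := by
        refine Prod.ext (by ext w; simp) (funext fun w => ?_)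
        exact dif_neg w.2 }
  rw [← finrank_locallyConstant, ← finrank_locallyConstant, restrict.finrank_eq,
    Module.finrank_prod, Module.finrank_fintype_fun_eq_card, ← Nat.card_eq_fintype_card]
  rfl

end Cycles

section SpanningRestGraph

variable {V : Type*} {m : ℕ} {E : Fin m → Finset V} {H H' : Finset (Fin m)}

/-- `Bip 𝓗|_H` as a spanning subgraph of `Bip 𝓗`, so that these graphs for different `H` share
their vertex set. -/
def spanningRestGraph (m : ℕ) (E : Fin m → Finset V) (H : Finset (Fin m)) :
    SimpleGraph (V ⊕ Fin m) :=
  (restGraph m E H).spanningCoe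

lemma spanningRestGraph_adj {x y : V ⊕ Fin m} :
    (spanningRestGraph m E H).Adj x y ↔
      (bipGraph m E).Adj x y ∧ x ∈ bipVerts m E H ∧ y ∈ bipVerts m E H := by
  constructor
  · rintro ⟨-, x, y, h, rfl, rfl⟩
    exact ⟨h, x.2, y.2⟩
  · rintro ⟨h, hx, hy⟩
    exact ⟨h.ne, ⟨x, hx⟩, ⟨y, hy⟩, h, rfl, rfl⟩

@[simp]
lemma inr_mem_bipVerts {e : Fin m} : (Sum.inr e : V ⊕ Fin m) ∈ bipVerts m E H ↔ e ∈ H := by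
  simp [bipVerts]

@[simp]
lemma inl_mem_bipVerts {v : V} :
    (Sum.inl v : V ⊕ Fin m) ∈ bipVerts m E H ↔ ∃ e ∈ H, v ∈ E e := by
  simp [bipVerts]

@[simp]
lemma spanningRestGraph_adj_inl_inr {v : V} {e : Fin m} :
    (spanningRestGraph m E H).Adj (Sum.inl v) (Sum.inr e) ↔ e ∈ H ∧ v ∈ E e := by
  simp only [spanningRestGraph_adj, bipGraph, SimpleGraph.fromRel_adj, inl_mem_bipVerts,
    inr_mem_bipVerts]
  grind

@[simp]
lemma spanningRestGraph_adj_inr_inl {v : V} {e : Fin m} :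
    (spanningRestGraph m E H).Adj (Sum.inr e) (Sum.inl v) ↔ e ∈ H ∧ v ∈ E e := by
  rw [SimpleGraph.adj_comm, spanningRestGraph_adj_inl_inr]

@[simp]
lemma not_spanningRestGraph_adj_inl_inl {v v' : V} :
    ¬ (spanningRestGraph m E H).Adj (Sum.inl v) (Sum.inl v') := by
  simp [spanningRestGraph_adj, bipGraph]

@[simp]
lemma not_spanningRestGraph_adj_inr_inr {e e' : Fin m} :
    ¬ (spanningRestGraph m E H).Adj (Sum.inr e) (Sum.inr e') := by
  simp [spanningRestGraph_adj, bipGraph]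

lemma spanningRestGraph_univ : spanningRestGraph m E univ = bipGraph m E := by
  ext (x | x) (y | y) <;> simp [bipGraph]

lemma spanningRestGraph_union :
    spanningRestGraph m E (H ∪ H') = spanningRestGraph m E H ⊔ spanningRestGraph m E H' := by
  ext (x | x) (y | y) <;> simp [or_and_right]

lemma spanningRestGraph_inter :
    spanningRestGraph m E (H ∩ H') = spanningRestGraph m E H ⊓ spanningRestGraph m E H' := by
  ext (x | x) (y | y) <;> simp [← and_and_right]

lemma spanningRestGraph_mono : Monotone (spanningRestGraph m E) := by
  intro H H' hle
  rw [← union_eq_right.mpr hle, spanningRestGraph_union]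
  exact le_sup_left

lemma support_spanningRestGraph_subset :
    (spanningRestGraph m E H).support ⊆ bipVerts m E H :=
  fun _ ⟨_, h⟩ => (spanningRestGraph_adj.mp h).2.1

lemma induce_spanningRestGraph :
    (spanningRestGraph m E H).induce (bipVerts m E H) = restGraph m E H :=
  SimpleGraph.induce_spanningCoe

lemma ncard_bipVerts [DecidableEq V] :
    (bipVerts m E H).ncard = #(H.biUnion E) + #H := by
  have : bipVerts m E H = ((H.biUnion E).disjSum H : Finset (V ⊕ Fin m)) := by
    ext (x | x) <;> simp
  rw [this, Set.ncard_coe_finset, card_disjSum]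

lemma spanningRestGraph_isBipartiteWith [Fintype V] :
    (spanningRestGraph m E H).IsBipartiteWith
      (univ.map .inl : Finset (V ⊕ Fin m)) (H.map .inr : Finset (V ⊕ Fin m)) where
  disjoint := by simp [Set.disjoint_left]
  mem_of_adj := by rintro (x | x) (y | y) <;> simp_all

lemma card_edgeSet_spanningRestGraph [Finite V] :
    Nat.card (spanningRestGraph m E H).edgeSet = ∑ e ∈ H, #(E e) := by
  classical
  have := Fintype.ofFinite V
  have hdeg (e : Fin m) (he : e ∈ H) :
      (spanningRestGraph m E H).degree (Sum.inr e) = #(E e) := by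
    rw [← SimpleGraph.card_neighborFinset_eq_degree, ← card_map (.inl : V ↪ V ⊕ Fin m)]
    congr 1
    ext (x | x) <;> simp [he]
  rw [Nat.card_eq_fintype_card, ← SimpleGraph.edgeFinset_card,
    ← SimpleGraph.isBipartiteWith_sum_degrees_eq_card_edges' spanningRestGraph_isBipartiteWith,
    sum_map]
  exact sum_congr rfl hdeg

end SpanningRestGraph

section HyperedgesOfCycle

variable {V : Type*} {m : ℕ} {E : Fin m → Finset V} {H H' : Finset (Fin m)}

open Classical in
/-- The hyperedges that occur as end-vertices in a set `S` of edges of `Bip 𝓗`. -/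
noncomputable def hyperedgesOf (S : Set (Sym2 (V ⊕ Fin m))) : Finset (Fin m) :=
  {e | ∃ x ∈ S, Sum.inr e ∈ x}

lemma mem_hyperedgesOf {S : Set (Sym2 (V ⊕ Fin m))} {e : Fin m} :
    e ∈ hyperedgesOf S ↔ ∃ x ∈ S, Sum.inr e ∈ x := by
  simp [hyperedgesOf]

lemma hyperedgesOf_subset_iff {S : Set (Sym2 (V ⊕ Fin m))}
    (hS : S ⊆ (spanningRestGraph m E H).edgeSet) :
    hyperedgesOf S ⊆ H' ↔ S ⊆ (spanningRestGraph m E H').edgeSet := by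
  constructor
  · intro hsub x hx
    have hxH := hS hx
    induction x using Sym2.ind with | _ x y =>
    rcases x with x | x <;> rcases y with y | y <;>
      simp only [SimpleGraph.mem_edgeSet, spanningRestGraph_adj_inl_inr,
        spanningRestGraph_adj_inr_inl, not_spanningRestGraph_adj_inl_inl,
        not_spanningRestGraph_adj_inr_inr] at hxH ⊢
    · exact ⟨hsub (mem_hyperedgesOf.mpr ⟨_, hx, Sym2.mem_mk_right _ _⟩), hxH.2⟩
    · exact ⟨hsub (mem_hyperedgesOf.mpr ⟨_, hx, Sym2.mem_mk_left _ _⟩), hxH.2⟩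
  · intro hsub e he
    obtain ⟨_, hx, y, rfl⟩ := mem_hyperedgesOf.mp he
    exact inr_mem_bipVerts.mp (support_spanningRestGraph_subset ⟨y, hsub hx⟩)

lemma mem_cycleEdgeSets_spanningRestGraph_iff (hH : H' ⊆ H) {S : Set (Sym2 (V ⊕ Fin m))} :
    S ∈ cycleEdgeSets (spanningRestGraph m E H') ↔
      S ∈ cycleEdgeSets (spanningRestGraph m E H) ∧ hyperedgesOf S ⊆ H' := by
  rw [mem_cycleEdgeSets_iff_of_le (spanningRestGraph_mono hH)]
  refine and_congr_right fun hS => (hyperedgesOf_subset_iff (H := H) ?_).symm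
  exact ((mem_cycleEdgeSets_iff_of_le le_rfl).mp hS).2

lemma hyperedgesOf_subset_of_mem_cycleEdgeSets {S : Set (Sym2 (V ⊕ Fin m))}
    (hS : S ∈ cycleEdgeSets (spanningRestGraph m E H)) : hyperedgesOf S ⊆ H :=
  ((mem_cycleEdgeSets_spanningRestGraph_iff subset_rfl).mp hS).2

lemma ncard_of_mem_cycleEdgeSets_spanningRestGraph [Finite V] {S : Set (Sym2 (V ⊕ Fin m))}
    (hS : S ∈ cycleEdgeSets (spanningRestGraph m E H)) : S.ncard = 2 * #(hyperedgesOf S) := by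
  classical
  have := Fintype.ofFinite V
  have hmem (e : Fin m) (y) (hy : y ∈ S) (hey : Sum.inr e ∈ y) : e ∈ H :=
    hyperedgesOf_subset_of_mem_cycleEdgeSets hS (mem_hyperedgesOf.mpr ⟨y, hy, hey⟩)
  have hmap : (hyperedgesOf S).map .inr =
      ({x ∈ H.map .inr | ∃ e ∈ S, x ∈ e} : Finset (V ⊕ Fin m)) := by
    ext (x | x)
    · simp
    · simpa [mem_hyperedgesOf] using hmem x
  rw [← card_map (.inr : Fin m ↪ V ⊕ Fin m), hmap]
  convert ncard_of_mem_cycleEdgeSets_of_isBipartiteWith spanningRestGraph_isBipartiteWith hS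

lemma hasTwoCycles_iff :
    hasTwoCycles m E H ↔ (cycleEdgeSets (spanningRestGraph m E H)).Nontrivial := by
  rw [← image_cycleEdgeSets_induce support_spanningRestGraph_subset, induce_spanningRestGraph,
    Set.image_nontrivial (image_sym2Map_val_injective _)]
  constructor
  · rintro ⟨u₁, w₁, u₂, w₂, hw₁, hw₂, hne⟩
    exact ⟨_, ⟨u₁, w₁, hw₁, rfl⟩, _, ⟨u₂, w₂, hw₂, rfl⟩, hne⟩
  · rintro ⟨_, ⟨u₁, w₁, hw₁, rfl⟩, _, ⟨u₂, w₂, hw₂, rfl⟩, hne⟩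
    exact ⟨u₁, w₁, u₂, w₂, hw₁, hw₂, hne⟩

lemma mem_hypCj_iff {j : ℕ} :
    H ∈ hypCj m E j ↔
      #H = j ∧ ∃ S, S.ncard = 2 * j ∧ cycleEdgeSets (spanningRestGraph m E H) = {S} := by
  classical
  rw [hypCj, mem_filter_univ, ← image_cycleEdgeSets_induce support_spanningRestGraph_subset,
    induce_spanningRestGraph]
  refine and_congr_right fun _ => ?_
  constructor
  · rintro ⟨u, w, hw, hlen, huniq⟩
    refine ⟨Sym2.map Subtype.val '' w.edgeSet, ?_, ?_⟩
    · rw [Set.ncard_image_of_injective _ (Sym2.map.injective Subtype.val_injective),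
        ncard_edgeSet_of_isCycle hw, hlen]
    · rw [← Set.image_singleton (f := (Sym2.map Subtype.val '' ·))]
      congr 1
      refine Set.eq_singleton_iff_unique_mem.mpr ⟨⟨u, w, hw, rfl⟩, ?_⟩
      rintro _ ⟨u', w', hw', rfl⟩
      exact huniq u' w' hw'
  · rintro ⟨S, hcard, hS⟩
    obtain ⟨_, ⟨u, w, hw, rfl⟩, rfl⟩ := hS.ge rfl
    refine ⟨u, w, hw, ?_, fun u' w' hw' => image_sym2Map_val_injective _ ?_⟩
    · rwa [Set.ncard_image_of_injective _ (Sym2.map.injective Subtype.val_injective),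
        ncard_edgeSet_of_isCycle hw] at hcard
    · exact hS.le ⟨_, ⟨u', w', hw', rfl⟩, rfl⟩

end HyperedgesOfCycle

section HypergraphRank

variable {V : Type*} {m : ℕ} {E : Fin m → Finset V} {H : Finset (Fin m)}

lemma card_connectedComponent_spanningRestGraph_insert_lt [Finite V] {e : Fin m} (he : e ∉ H)
    (hE : (E e).Nonempty) :
    Nat.card (spanningRestGraph m E (insert e H)).ConnectedComponent <
      Nat.card (spanningRestGraph m E H).ConnectedComponent := by
  obtain ⟨v, hv⟩ := hE
  refine card_connectedComponent_lt (spanningRestGraph_mono (subset_insert e H))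
    (u := Sum.inr e) (v := Sum.inl v) ?_ (SimpleGraph.Adj.reachable (by simp [hv]))
  intro hreach
  obtain ⟨_, hadj⟩ := hreach.nonempty_neighborSet_left Sum.inr_ne_inl
  exact he (inr_mem_bipVerts.mp (support_spanningRestGraph_subset ⟨_, hadj⟩))

lemma cyclomaticNumber_spanningRestGraph_singleton [Finite V] (e : Fin m) :
    cyclomaticNumber (spanningRestGraph m E {e}) = 0 := by
  refine le_antisymm (not_lt.mp fun hpos => ?_) (cyclomaticNumber_nonneg _)
  obtain ⟨S, hS⟩ := nonempty_cycleEdgeSets_iff.mpr hpos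
  have hcard := ncard_of_mem_cycleEdgeSets_spanningRestGraph hS
  have hle := card_le_card (hyperedgesOf_subset_of_mem_cycleEdgeSets hS)
  rw [card_singleton] at hle
  obtain ⟨u, w, hw, rfl⟩ := hS
  rw [ncard_edgeSet_of_isCycle hw] at hcard
  have := hw.three_le_length
  omega

lemma card_connectedComponent_spanningRestGraph_add_card_le [Finite V]
    (hne : ∀ e, (E e).Nonempty) (H : Finset (Fin m)) :
    Nat.card (spanningRestGraph m E H).ConnectedComponent + #H ≤ Nat.card V + m := by
  induction H using Finset.induction_on with
  | empty =>
    have := Nat.card_le_card_of_surjective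
      (spanningRestGraph m E ∅).connectedComponentMk Quot.mk_surjective
    rwa [Nat.card_sum, Nat.card_fin] at this
  | insert e H he ih =>
    have := card_connectedComponent_spanningRestGraph_insert_lt he (hne e)
    rw [card_insert_of_notMem he]
    omega

variable [DecidableEq V]

/-- In particular the truncated subtraction in `muRank` is exact. -/
lemma muRank_add_card_add_card_connectedComponent [Finite V]
    (hne : ∀ e, (E e).Nonempty) (H : Finset (Fin m)) :
    muRank m E H + #H + Nat.card (spanningRestGraph m E H).ConnectedComponent =
      Nat.card V + m := by
  have hle := card_connectedComponent_spanningRestGraph_add_card_le hne H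
  have hcard := Set.ncard_add_ncard_compl (bipVerts m E H)
  rw [ncard_bipVerts, Nat.card_sum, Nat.card_fin] at hcard
  have hcc := card_connectedComponent_induce
    (support_spanningRestGraph_subset (E := E) (H := H))
  rw [induce_spanningRestGraph] at hcc
  rw [muRank, compCount]
  omega

lemma isPolymatroidRank_muRank [Finite V] (hne : ∀ e, (E e).Nonempty) :
    IsPolymatroidRank m (muRank m E) := by
  have hmu := muRank_add_card_add_card_connectedComponent hne
  refine ⟨by simp [muRank], fun H H' hsub => ?_, fun H H' => ?_⟩
  · refine Finset.monotone_iff_forall_le_insert.mpr (fun H e he => ?_) hsub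
    have := hmu H
    have := hmu (insert e H)
    have := card_insert_of_notMem he
    have := card_connectedComponent_spanningRestGraph_insert_lt he (hne e)
    omega
  · have := hmu H
    have := hmu H'
    have := hmu (H ∪ H')
    have := hmu (H ∩ H')
    have := card_union_add_card_inter H H'
    have := card_connectedComponent_supermodular
      (spanningRestGraph m E H) (spanningRestGraph m E H')
    rw [← spanningRestGraph_union, ← spanningRestGraph_inter] at this
    omega

lemma cast_muRank_eq_sum_sub_cyclomaticNumber [Finite V]
    (hne : ∀ e, (E e).Nonempty) (H : Finset (Fin m)) :
    (muRank m E H : ℤ) =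
      ∑ e ∈ H, (#(E e) : ℤ) - #H - cyclomaticNumber (spanningRestGraph m E H) := by
  have := muRank_add_card_add_card_connectedComponent hne H
  rw [cyclomaticNumber, card_edgeSet_spanningRestGraph, Nat.card_sum, Nat.card_fin]
  push_cast
  omega

lemma nullity_muRank [Finite V] (hne : ∀ e, (E e).Nonempty) (H : Finset (Fin m)) :
    nullity (muRank m E) H = cyclomaticNumber (spanningRestGraph m E H) := by
  simp [nullity, cast_muRank_eq_sum_sub_cyclomaticNumber hne,
    cyclomaticNumber_spanningRestGraph_singleton]

lemma nullity_muRank_le_one [Finite V] (hne : ∀ e, (E e).Nonempty) (hH : ¬ hasTwoCycles m E H) :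
    nullity (muRank m E) H ≤ 1 := by
  by_contra! hlt
  rw [nullity_muRank hne] at hlt
  exact hH (hasTwoCycles_iff.mpr (nontrivial_cycleEdgeSets hlt))

lemma isCircuit_nullity_muRank_iff [Finite V] (hne : ∀ e, (E e).Nonempty)
    (hH : ¬ hasTwoCycles m E H) :
    IsCircuit (nullity (muRank m E)) H ↔
      ∃ S, cycleEdgeSets (spanningRestGraph m E H) = {S} ∧ hyperedgesOf S = H := by
  have hle := nullity_muRank_le_one hne hH
  rw [hasTwoCycles_iff, Set.not_nontrivial_iff] at hH
  simp only [IsCircuit, nullity_muRank hne] at hle ⊢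
  constructor
  · rintro ⟨hone, herase⟩
    obtain ⟨S, hS⟩ := nonempty_cycleEdgeSets_iff.mpr (hone.symm ▸ one_pos)
    refine ⟨S, hH.eq_singleton_of_mem hS,
      (hyperedgesOf_subset_of_mem_cycleEdgeSets hS).antisymm fun e he => ?_⟩
    by_contra heS
    have hS' : S ∈ cycleEdgeSets (spanningRestGraph m E (H.erase e)) :=
      (mem_cycleEdgeSets_spanningRestGraph_iff (erase_subset e H)).mpr
        ⟨hS, subset_erase.mpr ⟨hyperedgesOf_subset_of_mem_cycleEdgeSets hS, heS⟩⟩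
    exact (nonempty_cycleEdgeSets_iff.mp ⟨S, hS'⟩).ne' (herase e he)
  · rintro ⟨S, hS, hSH⟩
    have hpos := nonempty_cycleEdgeSets_iff.mp ⟨S, hS.ge rfl⟩
    refine ⟨le_antisymm hle hpos, fun e he => ?_⟩
    refine le_antisymm (not_lt.mp fun hlt => ?_) (cyclomaticNumber_nonneg _)
    obtain ⟨S', hS'⟩ := nonempty_cycleEdgeSets_iff.mpr hlt
    obtain ⟨hmem, hsub⟩ :=
      (mem_cycleEdgeSets_spanningRestGraph_iff (erase_subset e H)).mp hS'
    rw [hS.le hmem, hSH] at hsub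
    exact notMem_erase e H (hsub he)

lemma hypCj_eq_Cset [Finite V] (hne : ∀ e, (E e).Nonempty) {j : ℕ}
    (hj : ∀ H, #H = j → ¬ hasTwoCycles m E H) : hypCj m E j = Cset m (muRank m E) j := by
  ext H
  rw [mem_hypCj_iff, mem_Cset_iff]
  refine and_congr_right fun hcard => ?_
  rw [isCircuit_nullity_muRank_iff hne (hj H hcard)]
  refine exists_congr fun S => ?_
  rw [and_comm]
  refine and_congr_right fun hS => ?_
  have hmem : S ∈ cycleEdgeSets (spanningRestGraph m E H) := hS.ge rfl
  have hsub := hyperedgesOf_subset_of_mem_cycleEdgeSets hmem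
  rw [ncard_of_mem_cycleEdgeSets_spanningRestGraph hmem, ← hcard]
  exact ⟨fun h => eq_of_subset_of_card_le hsub (by omega), fun h => by rw [h]⟩

end HypergraphRank

theorem stmt13_general {V : Type*} [Finite V] [DecidableEq V] (m : ℕ) (E : Fin m → Finset V)
    (hne : ∀ e : Fin m, (E e).Nonempty) (g : ℕ)
    (hg : g + m + Nat.card V =
      (∑ e : Fin m, #(E e)) + Nat.card (bipGraph m E).ConnectedComponent)
    (i : ℕ) (hi : ∀ H' : Finset (Fin m), #H' ≤ i → ¬ hasTwoCycles m E H') :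
    (interiorPoly m (muRank m E)).coeff i =
      ((g + i - 1).choose i : ℤ) -
        ∑ j ∈ Finset.range (i + 1),
          ((g + i - 1 - j).choose (i - j) : ℤ) * ((hypCj m E j).card : ℤ) := by
  have hnull : nullity (muRank m E) univ = g := by
    rw [nullity_muRank hne, cyclomaticNumber, card_edgeSet_spanningRestGraph,
      spanningRestGraph_univ, Nat.card_sum, Nat.card_fin]
    omega
  rw [coeff_interiorPoly (isPolymatroidRank_muRank hne)
    (fun H hH => nullity_muRank_le_one hne (hi H hH)) hnull]
  congr 1
  refine sum_congr rfl fun j hj => ?_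
  rw [hypCj_eq_Cset hne fun H hH => hi H (by grind)]

/-- For a connected hypergraph `𝓗 = (V, E)`, with
`g = ∑_{e ∈ E} deg_{Bip 𝓗}(e) - |E| - |V| + 1`, and every
`0 ≤ i < r'_2(𝓗) = min{|H'| : Bip 𝓗|_{H'} contains at least 2 cycles}`, the coefficient of
`x^i` in the interior polynomial of `𝓗` equals
`C(g+i-1, i) - ∑_{j=0}^{i} C(g+i-1-j, i-j) * |C_j(𝓗)|`. -/
theorem stmt13 {V : Type*} [Fintype V] [DecidableEq V] (m : ℕ) (E : Fin m → Finset V)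
    (hne : ∀ e : Fin m, (E e).Nonempty) (hconn : (bipGraph m E).Connected)
    (g : ℕ) (hg : g + m + Fintype.card V = (∑ e : Fin m, (E e).card) + 1)
    (i : ℕ)
    (hi : i < sInf {c | ∃ H' : Finset (Fin m), hasTwoCycles m E H' ∧ c = H'.card}) :
    (interiorPoly m (muRank m E)).coeff i =
      ((g + i - 1).choose i : ℤ) -
        ∑ j ∈ Finset.range (i + 1),
          ((g + i - 1 - j).choose (i - j) : ℤ) * ((hypCj m E j).card : ℤ) := by
  exact stmt13_general m E hne g
    (by rwa [card_connectedComponent_eq_one hconn, Nat.card_eq_fintype_card]) i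
    fun H' hH' htwo => (hi.trans_le (Nat.sInf_le ⟨H', htwo, rfl⟩)).not_ge hH'
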